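/- Fix m > 0 and take μ(ρ) = −2m/ρ, so that ḡ = e^{−2m/ρ}·diag(1, ρ², ρ² sin²θ, 1) on ρ > 0, 0 < θ < π. Then R̄_{1313}·R̄_{1414}·R̄_{2323}·R̄_{2424} = (det ḡ)²·κ̄², where det ḡ = e^{4μ} ρ⁴ sin²θ and κ̄ = (2m²/ρ⁶)·e^{4m/ρ}·√((1 + m/(2ρ))(1 + m/ρ)); hence the curvature κ̄ = √(R̄_{1313} R̄_{1414} R̄_{2323} R̄_{2424}) / det ḡ equals (2m²/ρ⁶) e^{4m/ρ} √((1 + m/(2ρ))(1 + m/ρ)). -/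

import Mathlib

noncomputable section

/-- Partial derivative of a scalar function on `ℝ⁴` in the `i`-th coordinate direction. -/
def pd (f : (Fin 4 → ℝ) → ℝ) (i : Fin 4) (x : Fin 4 → ℝ) : ℝ :=
  fderiv ℝ f x (Pi.single i 1)

/-- Christoffel symbols of the first kind,
`Γ_{αβ,γ} = ½ (∂_{q^α} g_{βγ} + ∂_{q^β} g_{αγ} - ∂_{q^γ} g_{αβ})`. -/
def Γ1 (g : (Fin 4 → ℝ) → Matrix (Fin 4) (Fin 4) ℝ) (α β γ : Fin 4) (x : Fin 4 → ℝ) : ℝ :=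
  (1 / 2) * (pd (fun y => g y β γ) α x + pd (fun y => g y α γ) β x - pd (fun y => g y α β) γ x)

/-- Covariant Riemann–Christoffel curvature components
`R_{αβδγ} = ∂_{q^δ} Γ_{βγ,α} - ∂_{q^γ} Γ_{βδ,α} + Σ_{λσ} g^{λσ} (Γ_{βδ,λ} Γ_{αγ,σ} - Γ_{βγ,λ} Γ_{αδ,σ})`. -/
def Rcov (g : (Fin 4 → ℝ) → Matrix (Fin 4) (Fin 4) ℝ) (α β δ γ : Fin 4) (x : Fin 4 → ℝ) : ℝ :=
  pd (Γ1 g β γ α) δ x - pd (Γ1 g β δ α) γ x +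
    ∑ lam, ∑ sig, (g x)⁻¹ lam sig *
      (Γ1 g β δ lam x * Γ1 g α γ sig x - Γ1 g β γ lam x * Γ1 g α δ sig x)

/-- The conformally flat-type diagonal metric
`ḡ = e^{μ(ρ)} · diag (1, ρ², ρ² sin² θ, 1)` in coordinates `(ρ, θ, φ, τ) = (x 0, x 1, x 2, x 3)`. -/
def gConf (μ : ℝ → ℝ) (x : Fin 4 → ℝ) : Matrix (Fin 4) (Fin 4) ℝ :=
  Real.exp (μ (x 0)) •
    Matrix.diagonal ![(1 : ℝ), (x 0) ^ 2, (x 0) ^ 2 * Real.sin (x 1) ^ 2, 1]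

/-!
For a diagonal metric `diag(h₀, …, h₃)` and `i ≠ j`, the component `R_{ijij}` involves only the
derivatives `∂ᵢ²hⱼ`, `∂ⱼ²hᵢ` and products of first derivatives. Every coefficient of `ḡ` has the
form `e^{μ(ρ)} ρⁿ sinˡ θ`, hence logarithmic derivatives `μ' + n/ρ` and `l cot θ`, and in terms of
these the curvature formula becomes a rational identity. For an arbitrary conformal exponent `μ` it
gives `R̄₁₃₁₃ R̄₁₄₁₄ R̄₂₃₂₃ R̄₂₄₂₄` as `e^{4μ} ρ⁵ sin⁴ θ` times a polynomial in `ρ`, `μ'` and `μ''`,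
and `μ = -2m/ρ` is then substituted.
-/

open Topology Matrix

section PartialDerivatives

variable {f k : ℝ → ℝ} {x : Fin 4 → ℝ}

lemma pd_const (c : ℝ) (i : Fin 4) (x : Fin 4 → ℝ) : pd (fun _ => c) i x = 0 := by
  simp [pd]

lemma pd_const_mul (c : ℝ) (F : (Fin 4 → ℝ) → ℝ) (i : Fin 4) (x : Fin 4 → ℝ) :
    pd (fun y => c * F y) i x = c * pd F i x := by
  change fderiv ℝ (c • F) x _ = _
  rw [fderiv_const_smul_field]
  rfl

lemma pd_congr_of_eventuallyEq {F G : (Fin 4 → ℝ) → ℝ} (h : F =ᶠ[𝓝 x] G) (i : Fin 4) :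
    pd F i x = pd G i x := by
  rw [pd, h.fderiv_eq, pd]

lemma pd_apply_mul_apply {f' k' : ℝ} {a b : Fin 4} (hf : HasDerivAt f f' (x a))
    (hk : HasDerivAt k k' (x b)) (i : Fin 4) :
    pd (fun y => f (y a) * k (y b)) i x =
      (Pi.single a (f' * k (x b)) + Pi.single b (f (x a) * k') : Fin 4 → ℝ) i := by
  have hfa := hf.comp_hasFDerivAt x (hasFDerivAt_apply (𝕜 := ℝ) a x)
  have hkb := hk.comp_hasFDerivAt x (hasFDerivAt_apply (𝕜 := ℝ) b x)
  have hmul : HasFDerivAt (fun y : Fin 4 → ℝ => f (y a) * k (y b)) _ x := hfa.mul hkb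
  rw [pd, hmul.fderiv]
  simp only [Function.comp_apply, _root_.add_apply, _root_.smul_apply,
    ContinuousLinearMap.proj_apply, Pi.single_apply, smul_eq_mul, Pi.add_apply, eq_comm (a := i)]
  split_ifs <;> ring

lemma eventually_nhds_apply {ι : Type*} {X : ι → Type*} [∀ i, TopologicalSpace (X i)]
    {x : ∀ i, X i} {a : ι} {P : X a → Prop} (h : ∀ᶠ t in 𝓝 (x a), P t) : ∀ᶠ y in 𝓝 x, P (y a) :=
  (continuous_apply a).continuousAt.eventually h

variable {f' k' : ℝ → ℝ} {f'' k'' : ℝ} {a b : Fin 4}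

lemma pd_pd_apply_mul_apply (hab : a ≠ b) (hf : ∀ᶠ t in 𝓝 (x a), HasDerivAt f (f' t) t)
    (hf' : HasDerivAt f' f'' (x a)) (hk : ∀ᶠ t in 𝓝 (x b), HasDerivAt k (k' t) t)
    (hk' : HasDerivAt k' k'' (x b)) (i : Fin 4) :
    pd (pd (fun y => f (y a) * k (y b)) i) i x =
      (Pi.single a (f'' * k (x b)) + Pi.single b (f (x a) * k'') : Fin 4 → ℝ) i := by
  have first_pd : pd (fun y => f (y a) * k (y b)) i =ᶠ[𝓝 x] fun y =>
      (Pi.single a (f' (y a) * k (y b)) + Pi.single b (f (y a) * k' (y b)) : Fin 4 → ℝ) i := by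
    filter_upwards [eventually_nhds_apply hf, eventually_nhds_apply hk] with y hfy hky
    exact pd_apply_mul_apply hfy hky i
  rw [pd_congr_of_eventuallyEq first_pd]
  rcases eq_or_ne i a with rfl | hia
  · simpa [hab] using pd_apply_mul_apply hf' hk.self_of_nhds i
  rcases eq_or_ne i b with rfl | hib
  · simpa [hia] using pd_apply_mul_apply hf.self_of_nhds hk' i
  · simpa [hia, hib] using pd_const 0 i x

end PartialDerivatives

section DiagonalMetrics

lemma inv_diagonal_of_ne_zero {n K : Type*} [Fintype n] [DecidableEq n] [Field K] {v : n → K}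
    (hv : ∀ k, v k ≠ 0) : (diagonal v)⁻¹ = diagonal fun k => (v k)⁻¹ :=
  inv_eq_right_inv <| by simp [diagonal_mul_diagonal, hv]

variable (h : (Fin 4 → ℝ) → Fin 4 → ℝ) {i j k : Fin 4} (x : Fin 4 → ℝ)

lemma pd_diagonal_apply (i j k : Fin 4) :
    pd (fun y => diagonal (h y) i j) k x = if i = j then pd (h · i) k x else 0 := by
  split_ifs with hij
  · simp [hij]
  · simp [diagonal_apply_ne _ hij, pd_const]

lemma Γ1_diagonal_self_left (i j : Fin 4) :
    Γ1 (fun y => diagonal (h y)) i j i x = 1 / 2 * pd (h · i) j x := by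
  simp only [Γ1, pd_diagonal_apply]
  rcases eq_or_ne i j with rfl | hij
  · simp
  · simp [hij, hij.symm]

lemma Γ1_diagonal_self_right (i j : Fin 4) :
    Γ1 (fun y => diagonal (h y)) j i i x = 1 / 2 * pd (h · i) j x := by
  simp only [Γ1, pd_diagonal_apply]
  rcases eq_or_ne i j with rfl | hij
  · simp
  · simp [hij.symm]

variable {x}

lemma Γ1_diagonal_of_ne (hik : i ≠ k) :
    Γ1 (fun y => diagonal (h y)) i i k x = -1 / 2 * pd (h · i) k x := by
  simp only [Γ1, pd_diagonal_apply, if_neg hik, if_true]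
  ring

lemma Γ1_diagonal_of_pairwise_ne (hij : i ≠ j) (hik : i ≠ k) (hjk : j ≠ k) :
    Γ1 (fun y => diagonal (h y)) i j k x = 0 := by
  simp only [Γ1, pd_diagonal_apply, if_neg hij, if_neg hik, if_neg hjk]
  ring

variable {h}

lemma Rcov_diagonal (hx : ∀ k, h x k ≠ 0) (α β δ γ : Fin 4) :
    Rcov (fun y => diagonal (h y)) α β δ γ x =
      pd (Γ1 (fun y => diagonal (h y)) β γ α) δ x - pd (Γ1 (fun y => diagonal (h y)) β δ α) γ x +
        ∑ k, (h x k)⁻¹ *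
          (Γ1 (fun y => diagonal (h y)) β δ k x * Γ1 (fun y => diagonal (h y)) α γ k x -
            Γ1 (fun y => diagonal (h y)) β γ k x * Γ1 (fun y => diagonal (h y)) α δ k x) := by
  simp [Rcov, inv_diagonal_of_ne_zero hx, diagonal_apply]

lemma Rcov_diagonal_plane (hx : ∀ k, h x k ≠ 0) (hij : i ≠ j) :
    Rcov (fun y => diagonal (h y)) i j i j x =
      -(pd (pd (h · j) i) i x + pd (pd (h · i) j) j x) / 2 +
        (pd (h · i) j x ^ 2 + pd (h · i) i x * pd (h · j) i x) / (4 * h x i) +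
        (pd (h · j) i x ^ 2 + pd (h · i) j x * pd (h · j) j x) / (4 * h x j) -
        ∑ k ∈ {i, j}ᶜ, pd (h · i) k x * pd (h · j) k x / (4 * h x k) := by
  have hΓjj : Γ1 (fun y => diagonal (h y)) j j i = fun y => -1 / 2 * pd (h · j) i y :=
    funext fun _ => Γ1_diagonal_of_ne h hij.symm
  have hΓji : Γ1 (fun y => diagonal (h y)) j i i = fun y => 1 / 2 * pd (h · i) j y :=
    funext fun y => Γ1_diagonal_self_right h y i j
  rw [Rcov_diagonal hx, hΓjj, hΓji, pd_const_mul, pd_const_mul,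
    ← Finset.sum_add_sum_compl {i, j}, Finset.sum_pair hij, sub_eq_add_neg _ (∑ k ∈ _, _),
    ← Finset.sum_neg_distrib, ← add_assoc]
  congr 1
  · rw [Γ1_diagonal_self_right, Γ1_diagonal_self_left, Γ1_diagonal_of_ne h hij.symm,
      Γ1_diagonal_self_left, Γ1_diagonal_self_left, Γ1_diagonal_self_right,
      Γ1_diagonal_self_left, Γ1_diagonal_of_ne h hij]
    have hxi := hx i
    have hxj := hx j
    field_simp
    ring
  · refine Finset.sum_congr rfl fun k hk => ?_
    obtain ⟨hki, hkj⟩ : k ≠ i ∧ k ≠ j := by simpa using hk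
    rw [Γ1_diagonal_of_pairwise_ne h hij.symm hkj.symm hki.symm,
      Γ1_diagonal_of_ne h hkj.symm, Γ1_diagonal_of_ne h hki.symm]
    have hxk := hx k
    field_simp
    ring

end DiagonalMetrics

section OneVariableDerivatives

lemma hasDerivAt_mul_log_deriv {f a : ℝ → ℝ} {a' t : ℝ} (hf : HasDerivAt f (f t * a t) t)
    (ha : HasDerivAt a a' t) : HasDerivAt (fun s => f s * a s) (f t * (a t ^ 2 + a')) t :=
  (hf.mul ha).congr_deriv (by ring)

lemma hasDerivAt_exp_mul_pow {μ : ℝ → ℝ} {μ' t : ℝ} (hμ : HasDerivAt μ μ' t) (ht : t ≠ 0)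
    (n : ℕ) : HasDerivAt (fun s => Real.exp (μ s) * s ^ n)
      (Real.exp (μ t) * t ^ n * (μ' + n / t)) t := by
  refine (hμ.exp.mul (hasDerivAt_pow n t)).congr_deriv ?_
  cases n
  · simp
  · simp only [Nat.add_sub_cancel, pow_succ]
    field_simp

lemma hasDerivAt_sin_pow {θ : ℝ} (hθ : Real.sin θ ≠ 0) (l : ℕ) :
    HasDerivAt (fun s => Real.sin s ^ l) (Real.sin θ ^ l * (l * Real.cot θ)) θ := by
  refine ((Real.hasDerivAt_sin θ).pow l).congr_deriv ?_
  cases l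
  · simp
  · simp only [Nat.add_sub_cancel, pow_succ, Real.cot_eq_cos_div_sin]
    field_simp

lemma hasDerivAt_cot {θ : ℝ} (hθ : Real.sin θ ≠ 0) :
    HasDerivAt Real.cot (-(1 + Real.cot θ ^ 2)) θ := by
  have hcot : Real.cot = fun s => Real.cos s / Real.sin s := funext Real.cot_eq_cos_div_sin
  rw [hcot]
  refine ((Real.hasDerivAt_cos θ).div (Real.hasDerivAt_sin θ) hθ).congr_deriv ?_
  field_simp
  ring

lemma hasDerivAt_const_div_pow (c : ℝ) (n : ℕ) {t : ℝ} (ht : t ≠ 0) :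
    HasDerivAt (fun s => c / s ^ n) (-(n * c) / t ^ (n + 1)) t := by
  refine ((hasDerivAt_const t c).div (hasDerivAt_pow n t) (pow_ne_zero n ht)).congr_deriv ?_
  cases n
  · simp
  · simp only [Nat.add_sub_cancel]
    field_simp
    ring

end OneVariableDerivatives

/-- The exponents of `ρ` in the diagonal coefficients of `ḡ`. -/
def radialExponent : Fin 4 → ℕ := ![0, 2, 2, 0]

/-- The exponents of `sin θ` in the diagonal coefficients of `ḡ`. -/
def polarExponent : Fin 4 → ℕ := ![0, 0, 2, 0]

/-- The diagonal coefficients `e^{μ(ρ)} ρⁿ sinˡ θ` of `ḡ`, written uniformly in the index so that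
all of them are differentiated at once. -/
def gConfDiag (μ : ℝ → ℝ) (x : Fin 4 → ℝ) (k : Fin 4) : ℝ :=
  Real.exp (μ (x 0)) * x 0 ^ radialExponent k * Real.sin (x 1) ^ polarExponent k

lemma gConf_eq_diagonal (μ : ℝ → ℝ) : gConf μ = fun x => diagonal (gConfDiag μ x) := by
  funext x
  rw [gConf, ← diagonal_smul]
  congr 1
  funext k
  fin_cases k <;> simp [gConfDiag, radialExponent, polarExponent, mul_assoc]

lemma exp_four_mul (t : ℝ) : Real.exp (4 * t) = Real.exp t ^ 4 := by
  simpa using Real.exp_nat_mul t 4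

lemma det_gConf (μ : ℝ → ℝ) (x : Fin 4 → ℝ) :
    (gConf μ x).det = Real.exp (4 * μ (x 0)) * x 0 ^ 4 * Real.sin (x 1) ^ 2 := by
  rw [gConf_eq_diagonal, det_diagonal, exp_four_mul]
  simp only [Fin.prod_univ_four, gConfDiag, radialExponent, polarExponent, cons_val]
  ring

section ConformalMetric

variable {μ : ℝ → ℝ} {x : Fin 4 → ℝ} (hρ : x 0 ≠ 0) (hθ : Real.sin (x 1) ≠ 0)

include hρ hθ

lemma gConfDiag_ne_zero (k : Fin 4) : gConfDiag μ x k ≠ 0 := by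
  simp [gConfDiag, hρ, hθ]

lemma pd_gConfDiag {μ' : ℝ} (hμ : HasDerivAt μ μ' (x 0)) (k i : Fin 4) :
    pd (gConfDiag μ · k) i x = gConfDiag μ x k *
      ![μ' + radialExponent k / x 0, polarExponent k * Real.cot (x 1), 0, 0] i := by
  refine (pd_apply_mul_apply (hasDerivAt_exp_mul_pow hμ hρ _) (hasDerivAt_sin_pow hθ _) i).trans ?_
  fin_cases i <;> simp [gConfDiag] <;> ring

variable {μ' : ℝ → ℝ} {μ'' : ℝ} (hμ : ∀ᶠ t in 𝓝 (x 0), HasDerivAt μ (μ' t) t)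
  (hμ' : HasDerivAt μ' μ'' (x 0))

include hμ hμ'

lemma pd_pd_gConfDiag (k i : Fin 4) :
    pd (pd (gConfDiag μ · k) i) i x = gConfDiag μ x k *
      ![(μ' (x 0) + radialExponent k / x 0) ^ 2 + (μ'' - radialExponent k / x 0 ^ 2),
        (polarExponent k * Real.cot (x 1)) ^ 2 - polarExponent k * (1 + Real.cot (x 1) ^ 2),
        0, 0] i := by
  have radial : ∀ᶠ t in 𝓝 (x 0), HasDerivAt (fun s => Real.exp (μ s) * s ^ radialExponent k)
      (Real.exp (μ t) * t ^ radialExponent k * (μ' t + radialExponent k / t)) t := by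
    filter_upwards [hμ, eventually_ne_nhds hρ] with t hμt ht
    exact hasDerivAt_exp_mul_pow hμt ht _
  have polar : ∀ᶠ s in 𝓝 (x 1), HasDerivAt (fun s => Real.sin s ^ polarExponent k)
      (Real.sin s ^ polarExponent k * (polarExponent k * Real.cot s)) s := by
    filter_upwards [Real.continuous_sin.continuousAt.eventually_ne hθ] with s hs
    exact hasDerivAt_sin_pow hs _
  have radial' := hasDerivAt_mul_log_deriv radial.self_of_nhds
    (hμ'.add ((hasDerivAt_inv hρ).const_mul (radialExponent k : ℝ)))
  have polar' := hasDerivAt_mul_log_deriv polar.self_of_nhds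
    ((hasDerivAt_cot hθ).const_mul (polarExponent k : ℝ))
  refine (pd_pd_apply_mul_apply zero_ne_one radial radial' polar polar' i).trans ?_
  fin_cases i <;> simp [gConfDiag] <;> ring

lemma Rcov_gConf_radial_azimuthal : Rcov (gConf μ) 0 2 0 2 x =
    -(Real.exp (μ (x 0)) * x 0 * Real.sin (x 1) ^ 2 * (x 0 * μ'' + μ' (x 0))) / 2 := by
  have hcompl : ({0, 2}ᶜ : Finset (Fin 4)) = {1, 3} := rfl
  rw [gConf_eq_diagonal, Rcov_diagonal_plane (gConfDiag_ne_zero hρ hθ) (by decide), hcompl,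
    Finset.sum_pair (by decide)]
  simp only [pd_pd_gConfDiag hρ hθ hμ hμ', pd_gConfDiag hρ hθ hμ.self_of_nhds]
  simp only [gConfDiag, radialExponent, polarExponent, cons_val, pow_zero, Nat.cast_ofNat,
    Nat.cast_zero]
  field_simp
  ring

lemma Rcov_gConf_radial_time : Rcov (gConf μ) 0 3 0 3 x = -(Real.exp (μ (x 0)) * μ'') / 2 := by
  have hcompl : ({0, 3}ᶜ : Finset (Fin 4)) = {1, 2} := rfl
  rw [gConf_eq_diagonal, Rcov_diagonal_plane (gConfDiag_ne_zero hρ hθ) (by decide), hcompl,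
    Finset.sum_pair (by decide)]
  simp only [pd_pd_gConfDiag hρ hθ hμ hμ', pd_gConfDiag hρ hθ hμ.self_of_nhds]
  simp only [gConfDiag, radialExponent, polarExponent, cons_val, pow_zero, Nat.cast_zero]
  field_simp
  ring

lemma Rcov_gConf_polar_azimuthal : Rcov (gConf μ) 1 2 1 2 x =
    -(Real.exp (μ (x 0)) * x 0 ^ 3 * Real.sin (x 1) ^ 2 * μ' (x 0) * (1 + x 0 * μ' (x 0) / 4)) := by
  have hcompl : ({1, 2}ᶜ : Finset (Fin 4)) = {0, 3} := rfl
  rw [gConf_eq_diagonal, Rcov_diagonal_plane (gConfDiag_ne_zero hρ hθ) (by decide), hcompl,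
    Finset.sum_pair (by decide)]
  simp only [pd_pd_gConfDiag hρ hθ hμ hμ', pd_gConfDiag hρ hθ hμ.self_of_nhds]
  simp only [gConfDiag, radialExponent, polarExponent, cons_val, pow_zero, Nat.cast_ofNat,
    Nat.cast_zero]
  field_simp
  ring

lemma Rcov_gConf_polar_time : Rcov (gConf μ) 1 3 1 3 x =
    -(Real.exp (μ (x 0)) * x 0 * μ' (x 0) * (1 + x 0 * μ' (x 0) / 2)) / 2 := by
  have hcompl : ({1, 3}ᶜ : Finset (Fin 4)) = {0, 2} := rfl
  rw [gConf_eq_diagonal, Rcov_diagonal_plane (gConfDiag_ne_zero hρ hθ) (by decide), hcompl,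
    Finset.sum_pair (by decide)]
  simp only [pd_pd_gConfDiag hρ hθ hμ hμ', pd_gConfDiag hρ hθ hμ.self_of_nhds]
  simp only [gConfDiag, radialExponent, polarExponent, cons_val, pow_zero, Nat.cast_ofNat,
    Nat.cast_zero]
  field_simp
  ring

lemma Rcov_gConf_prod :
    Rcov (gConf μ) 0 2 0 2 x * Rcov (gConf μ) 0 3 0 3 x *
        Rcov (gConf μ) 1 2 1 2 x * Rcov (gConf μ) 1 3 1 3 x =
      Real.exp (4 * μ (x 0)) * x 0 ^ 5 * Real.sin (x 1) ^ 4 *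
        (μ' (x 0) ^ 2 * μ'' * (x 0 * μ'' + μ' (x 0)) *
          (1 + x 0 * μ' (x 0) / 4) * (1 + x 0 * μ' (x 0) / 2)) / 8 := by
  rw [Rcov_gConf_radial_azimuthal hρ hθ hμ hμ', Rcov_gConf_radial_time hρ hθ hμ hμ',
    Rcov_gConf_polar_azimuthal hρ hθ hμ hμ', Rcov_gConf_polar_time hρ hθ hμ hμ', exp_four_mul]
  ring

end ConformalMetric

section InverseRadialExponent

variable {m : ℝ} {μ : ℝ → ℝ} (hμdef : ∀ ρ : ℝ, μ ρ = -(2 * m) / ρ)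

include hμdef

lemma Rcov_gConf_prod_of_eq_div {x : Fin 4 → ℝ} (hρ : x 0 ≠ 0) (hθ : Real.sin (x 1) ≠ 0) :
    Rcov (gConf μ) 0 2 0 2 x * Rcov (gConf μ) 0 3 0 3 x *
        Rcov (gConf μ) 1 2 1 2 x * Rcov (gConf μ) 1 3 1 3 x =
      (gConf μ x).det ^ 2 * ((2 * m ^ 2 / x 0 ^ 6 * Real.exp (4 * m / x 0)) ^ 2 *
        ((1 + m / (2 * x 0)) * (1 + m / x 0))) := by
  have hμ : ∀ᶠ t in 𝓝 (x 0), HasDerivAt μ (2 * m / t ^ 2) t := by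
    filter_upwards [eventually_ne_nhds hρ] with t ht
    simpa [funext hμdef] using hasDerivAt_const_div_pow (-(2 * m)) 1 ht
  have hμ' := hasDerivAt_const_div_pow (2 * m) 2 hρ
  have hexp : Real.exp (4 * m / x 0) = (Real.exp (μ (x 0)) ^ 2)⁻¹ := by
    rw [← Real.exp_nat_mul, ← Real.exp_neg, hμdef]
    ring_nf
  rw [Rcov_gConf_prod hρ hθ hμ hμ', det_gConf, hexp, exp_four_mul]
  have hE := Real.exp_ne_zero (μ (x 0))
  push_cast
  field_simp
  ring

theorem conformal_curvature_general {x : Fin 4 → ℝ} (hρ : x 0 ≠ 0) (hθ : Real.sin (x 1) ≠ 0)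
    (hradicand : 0 ≤ (1 + m / (2 * x 0)) * (1 + m / x 0)) :
    Rcov (gConf μ) 0 2 0 2 x * Rcov (gConf μ) 0 3 0 3 x *
        Rcov (gConf μ) 1 2 1 2 x * Rcov (gConf μ) 1 3 1 3 x =
      (gConf μ x).det ^ 2 *
        (2 * m ^ 2 / x 0 ^ 6 * Real.exp (4 * m / x 0) *
          Real.sqrt ((1 + m / (2 * x 0)) * (1 + m / x 0))) ^ 2 ∧
    (gConf μ x).det = Real.exp (4 * μ (x 0)) * x 0 ^ 4 * Real.sin (x 1) ^ 2 ∧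
    Real.sqrt (Rcov (gConf μ) 0 2 0 2 x * Rcov (gConf μ) 0 3 0 3 x *
          Rcov (gConf μ) 1 2 1 2 x * Rcov (gConf μ) 1 3 1 3 x) /
        (gConf μ x).det =
      2 * m ^ 2 / x 0 ^ 6 * Real.exp (4 * m / x 0) *
        Real.sqrt ((1 + m / (2 * x 0)) * (1 + m / x 0)) := by
  have hdet : 0 < (gConf μ x).det := by
    rw [det_gConf]
    positivity
  have hprod := Rcov_gConf_prod_of_eq_div hμdef hρ hθ
  rw [← Real.sq_sqrt hradicand, ← mul_pow] at hprod
  refine ⟨hprod, det_gConf μ x, ?_⟩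
  rw [hprod, ← mul_pow, Real.sqrt_sq (by positivity), mul_div_cancel_left₀ _ hdet.ne']

end InverseRadialExponent

/-- for the metric `ḡ = e^{-2m/ρ} · diag (1, ρ², ρ² sin² θ, 1)` on `ρ > 0`,
`0 < θ < π` (i.e. `μ(ρ) = -2m/ρ`), one has
`R̄₁₃₁₃ R̄₁₄₁₄ R̄₂₃₂₃ R̄₂₄₂₄ = (det ḡ)² κ̄²` with `det ḡ = e^{4μ} ρ⁴ sin² θ` and
`κ̄ = (2m²/ρ⁶) e^{4m/ρ} √((1 + m/(2ρ)) (1 + m/ρ))`; hence the curvature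
`κ̄ = √(R̄₁₃₁₃ R̄₁₄₁₄ R̄₂₃₂₃ R̄₂₄₂₄) / det ḡ` equals this value.  (Indices are 0-based.) -/
theorem conformal_curvature (m : ℝ) (hm : 0 < m) (μ : ℝ → ℝ)
    (hμdef : ∀ ρ : ℝ, μ ρ = -(2 * m) / ρ) :
    ∀ x : Fin 4 → ℝ, 0 < x 0 → 0 < x 1 → x 1 < Real.pi →
      Rcov (gConf μ) 0 2 0 2 x * Rcov (gConf μ) 0 3 0 3 x *
          Rcov (gConf μ) 1 2 1 2 x * Rcov (gConf μ) 1 3 1 3 x =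
        ((gConf μ x).det) ^ 2 *
          (2 * m ^ 2 / (x 0) ^ 6 * Real.exp (4 * m / x 0) *
            Real.sqrt ((1 + m / (2 * x 0)) * (1 + m / x 0))) ^ 2 ∧
      (gConf μ x).det = Real.exp (4 * μ (x 0)) * (x 0) ^ 4 * Real.sin (x 1) ^ 2 ∧
      Real.sqrt (Rcov (gConf μ) 0 2 0 2 x * Rcov (gConf μ) 0 3 0 3 x *
            Rcov (gConf μ) 1 2 1 2 x * Rcov (gConf μ) 1 3 1 3 x) /
          (gConf μ x).det =
        2 * m ^ 2 / (x 0) ^ 6 * Real.exp (4 * m / x 0) *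
          Real.sqrt ((1 + m / (2 * x 0)) * (1 + m / x 0)) := by
  intro x hρ hθ₀ hθπ
  exact conformal_curvature_general hμdef hρ.ne' (Real.sin_pos_of_pos_of_lt_pi hθ₀ hθπ).ne'
    (by positivity)

end
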